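/- arXiv:2512.05761 — 2 statements merged into one kernel-verified Lean document; each statement's English description precedes it below -/
import Mathlib

section
/- Maassen–Uffink relation for mixed states (state-independent benchmark for the unassisted dephasing cost). Let d ≥ 1, let ρ be a d×d complex matrix that is positive semidefinite with trace 1, and let u, v be two orthonormal bases of EuclideanSpace ℂ (Fin d). Define the dephasing distributions q(k) = Re ⟪u k, ρ (u k)⟫ and r(ℓ) = Re ⟪v ℓ, ρ (v ℓ)⟫ (where ρ acts via Matrix.toEuclideanLin), and let c = max over k, ℓ of ‖⟪u k, v ℓ⟫‖. Then (1/2)·(H(q) + H(r)) ≥ −log₂ c, where H is the base-2 Shannon entropy. -/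
open scoped ComplexOrder

/-- Base-2 Shannon entropy of a finitely supported probability vector,
with the convention `0 · log₂ 0 = 0`. -/
noncomputable def shannonEntropy2 {n : ℕ} (q : Fin n → ℝ) : ℝ :=
  ∑ k, Real.negMulLog (q k) / Real.log 2

/-!
The Kirkwood–Dirac quasi-probability `w k l = ⟪u k, v l⟫ * ⟪v l, S (u k)⟫` of a state `S` is a
complex coupling of the two dephasing distributions `q` and `r`. Interpolate along
`F z = ∑ k, ∑ l, (q k * r l) ^ (z / 2) * w k l`. For `re z = 0` the value `F z` is the trace of `S`
times a product of two contractions, so `‖F z‖ ≤ 1`; for `re z = 1` the Cauchy–Schwarz inequality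
for the form `⟪x, S y⟫` gives `‖F z‖ ≤ c`. By the three lines theorem `‖F x‖ ≤ c ^ x` for
`x ∈ [0, 1]`, with equality at `x = 0`. Comparing derivatives there proves the bound, because the
marginals of `w` turn `F' 0` into minus half the sum of the two entropies.
-/

open scoped InnerProductSpace
open Complex.HadamardThreeLines (verticalStrip verticalClosedStrip)

section ThreeLines

theorem re_deriv_le_log_of_norm_le_on_strip {F : ℂ → ℂ} {F' : ℂ} {c : ℝ} (hc : 0 < c)
    (hF : DiffContOnCl ℂ F (verticalStrip 0 1))
    (hbdd : BddAbove ((norm ∘ F) '' verticalClosedStrip 0 1))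
    (hF_left : ∀ z : ℂ, z.re = 0 → ‖F z‖ ≤ 1) (hF_right : ∀ z : ℂ, z.re = 1 → ‖F z‖ ≤ c)
    (hF_zero : F 0 = 1) (hF' : HasDerivAt F F' 0) :
    F'.re ≤ Real.log c := by
  have three_lines : ∀ x ∈ Set.Icc (0 : ℝ) 1, (F x).re ≤ c ^ x := fun x hx ↦ by
    simpa using (Complex.re_le_norm _).trans
      (Complex.HadamardThreeLines.norm_le_interp_of_mem_verticalClosedStrip₀₁' F (z := x)
        (by simpa [verticalClosedStrip] using hx) hF hbdd hF_left hF_right)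
  have max_at_zero : IsMaxOn (fun x : ℝ ↦ (F x).re - c ^ x) (Set.Icc 0 1) 0 := fun x hx ↦ by
    simpa [hF_zero] using three_lines x hx
  have deriv_at_zero : HasDerivAt (fun x : ℝ ↦ (F x).re - c ^ x) (F'.re - Real.log c) 0 := by
    have hpow := (Real.hasStrictDerivAt_const_rpow hc 0).hasDerivAt
    simpa using (HasDerivAt.real_of_complex (z := 0) (by simpa using hF')).fun_sub hpow
  have one_mem_tangentCone : (1 : ℝ) ∈ posTangentConeAt (Set.Icc (0 : ℝ) 1) 0 :=
    mem_posTangentConeAt_of_segment_subset (by simp [segment_eq_Icc])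
  simpa using max_at_zero.localize.hasFDerivWithinAt_nonpos
    deriv_at_zero.hasFDerivAt.hasFDerivWithinAt one_mem_tangentCone

variable {ι : Type*} [Fintype ι]

/-- The exponential sum with real frequencies `t` and complex weights `m`, as a function of a
complex variable: the analytic family to which the three lines theorem is applied. -/
noncomputable def expSum (t : ι → ℝ) (m : ι → ℂ) (z : ℂ) : ℂ :=
  ∑ i, Complex.exp (z * t i) * m i

variable (t : ι → ℝ) (m : ι → ℂ)

lemma expSum_zero : expSum t m 0 = ∑ i, m i := by
  simp [expSum]

lemma differentiable_expSum : Differentiable ℂ (expSum t m) := by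
  unfold expSum
  fun_prop

lemma hasDerivAt_expSum_zero : HasDerivAt (expSum t m) (∑ i, t i * m i) 0 := by
  refine HasDerivAt.fun_sum fun i _ ↦ HasDerivAt.mul_const ?_ (m i)
  simpa using ((hasDerivAt_id (0 : ℂ)).mul_const (t i : ℂ)).cexp

lemma norm_exp_mul_ofReal (z : ℂ) (x : ℝ) : ‖Complex.exp (z * x)‖ = Real.exp (z.re * x) := by
  rw [Complex.norm_exp, Complex.re_mul_ofReal]

lemma norm_expSum_le (z : ℂ) : ‖expSum t m z‖ ≤ ∑ i, Real.exp (z.re * t i) * ‖m i‖ :=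
  (norm_sum_le _ _).trans_eq <| Finset.sum_congr rfl fun i _ ↦ by
    rw [norm_mul, norm_exp_mul_ofReal]

lemma bddAbove_norm_expSum_verticalClosedStrip (a b : ℝ) :
    BddAbove ((norm ∘ expSum t m) '' verticalClosedStrip a b) := by
  have bound_continuous : Continuous fun x : ℝ ↦ ∑ i, Real.exp (x * t i) * ‖m i‖ := by fun_prop
  obtain ⟨M, hM⟩ := isCompact_Icc.bddAbove_image (K := Set.Icc a b) bound_continuous.continuousOn
  refine ⟨M, ?_⟩
  rintro _ ⟨z, hz, rfl⟩
  exact (norm_expSum_le t m z).trans (hM ⟨z.re, hz, rfl⟩)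

variable {t m}

theorem re_sum_mul_le_log_of_norm_expSum_le {c : ℝ} (hc : 0 < c) (hm : ∑ i, m i = 1)
    (h_left : ∀ z : ℂ, z.re = 0 → ‖expSum t m z‖ ≤ 1)
    (h_right : ∀ z : ℂ, z.re = 1 → ‖expSum t m z‖ ≤ c) :
    (∑ i, t i * m i).re ≤ Real.log c :=
  re_deriv_le_log_of_norm_le_on_strip hc (differentiable_expSum t m).diffContOnCl
    (bddAbove_norm_expSum_verticalClosedStrip t m 0 1) h_left h_right
    ((expSum_zero t m).trans hm) (hasDerivAt_expSum_zero t m)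

end ThreeLines

section Operators

variable {𝕜 E ι κ : Type*} [RCLike 𝕜] [NormedAddCommGroup E] [InnerProductSpace 𝕜 E]
variable [Fintype ι] [Fintype κ]

lemma trace_toEuclideanLin [DecidableEq ι] (A : Matrix ι ι 𝕜) :
    LinearMap.trace 𝕜 (EuclideanSpace 𝕜 ι) (Matrix.toEuclideanLin A) = A.trace :=
  Matrix.trace_toLin_eq A (PiLp.basisFun 2 𝕜 ι)

lemma norm_inner_map_le_sqrt_mul_sqrt {S : E →ₗ[𝕜] E} (hS : S.IsPositive) (x y : E) :
    ‖⟪x, S y⟫_𝕜‖ ≤ √(RCLike.re ⟪x, S x⟫_𝕜) * √(RCLike.re ⟪y, S y⟫_𝕜) := by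
  let form : PreInnerProductSpace.Core 𝕜 E :=
    { inner x y := ⟪x, S y⟫_𝕜
      conj_inner_symm x y := by rw [inner_conj_symm, hS.isSymmetric]
      re_inner_nonneg := hS.re_inner_nonneg_right
      add_left x y z := inner_add_left x y (S z)
      smul_left x y r := inner_smul_left x (S y) r }
  have norm_symm : ‖⟪y, S x⟫_𝕜‖ = ‖⟪x, S y⟫_𝕜‖ := by
    rw [norm_inner_symm, hS.isSymmetric]
  have cauchy_schwarz : ‖⟪x, S y⟫_𝕜‖ * ‖⟪y, S x⟫_𝕜‖
      ≤ RCLike.re ⟪x, S x⟫_𝕜 * RCLike.re ⟪y, S y⟫_𝕜 :=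
    @InnerProductSpace.Core.inner_mul_inner_self_le 𝕜 E _ _ _ form x y
  rw [norm_symm, ← sq] at cauchy_schwarz
  rw [← Real.sqrt_mul (hS.re_inner_nonneg_right x)]
  exact Real.le_sqrt_of_sq_le cauchy_schwarz

theorem norm_trace_mul_le_of_isPositive [FiniteDimensional 𝕜 E] {S W : E →ₗ[𝕜] E}
    (hS : S.IsPositive) (hW : ∀ x, ‖W x‖ ≤ ‖x‖) :
    ‖LinearMap.trace 𝕜 E (S * W)‖ ≤ RCLike.re (LinearMap.trace 𝕜 E S) := by
  let e := hS.isSymmetric.eigenvectorBasis rfl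
  let eig := hS.isSymmetric.eigenvalues rfl
  have trace_term (i) : ⟪e i, (S * W) (e i)⟫_𝕜 = eig i * ⟪e i, W (e i)⟫_𝕜 := by
    rw [Module.End.mul_apply, ← hS.isSymmetric, hS.isSymmetric.apply_eigenvectorBasis,
      inner_smul_left, RCLike.conj_ofReal]
  have norm_diag_le_one (i) : ‖⟪e i, W (e i)⟫_𝕜‖ ≤ 1 := by
    simpa using (norm_inner_le_norm (𝕜 := 𝕜) _ _).trans
      (mul_le_mul_of_nonneg_left (hW (e i)) (norm_nonneg (e i)))
  rw [LinearMap.trace_eq_sum_inner _ e, hS.isSymmetric.re_trace_eq_sum_eigenvalues rfl]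
  refine norm_sum_le_of_le _ fun i _ ↦ ?_
  have eig_nonneg : 0 ≤ eig i := hS.nonneg_eigenvalues rfl i
  rw [trace_term, norm_mul, RCLike.norm_of_nonneg eig_nonneg]
  exact mul_le_of_le_one_right eig_nonneg (norm_diag_le_one i)

/-- The operator that is diagonal in the orthonormal basis `u` with eigenvalues `α`. -/
noncomputable def diagonalOperator (u : OrthonormalBasis ι 𝕜 E) (α : ι → 𝕜) : E →ₗ[𝕜] E :=
  u.toBasis.constr 𝕜 fun k ↦ α k • u k

variable (u : OrthonormalBasis ι 𝕜 E) (v : OrthonormalBasis κ 𝕜 E) {S : E →ₗ[𝕜] E}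

lemma inner_diagonalOperator (α : ι → 𝕜) (k : ι) (x : E) :
    ⟪u k, diagonalOperator u α x⟫_𝕜 = α k * ⟪u k, x⟫_𝕜 := by
  simp only [diagonalOperator, Module.Basis.constr_apply_fintype, smul_smul,
    u.orthonormal.inner_right_fintype]
  simp [u.repr_apply_apply, mul_comm]

lemma norm_diagonalOperator_le {α : ι → 𝕜} (hα : ∀ k, ‖α k‖ ≤ 1) (x : E) :
    ‖diagonalOperator u α x‖ ≤ ‖x‖ := by
  refine le_of_sq_le_sq ?_ (norm_nonneg x)
  rw [← u.sum_sq_norm_inner_right, ← u.sum_sq_norm_inner_right x]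
  refine Finset.sum_le_sum fun k _ ↦ ?_
  rw [inner_diagonalOperator, norm_mul]
  gcongr
  exact mul_le_of_le_one_left (norm_nonneg _) (hα k)

/-- The outcome distribution of measuring the operator `S` in the orthonormal basis `u`, that is,
the diagonal left over when `S` is dephased in `u`. -/
noncomputable def dephasingDist (S : E →ₗ[𝕜] E) (k : ι) : ℝ :=
  RCLike.re ⟪u k, S (u k)⟫_𝕜

lemma dephasingDist_nonneg (hS : S.IsPositive) (k : ι) : 0 ≤ dephasingDist u S k :=
  hS.re_inner_nonneg_right (u k)

lemma sum_dephasingDist (S : E →ₗ[𝕜] E) :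
    ∑ k, dephasingDist u S k = RCLike.re (LinearMap.trace 𝕜 E S) := by
  simp only [dephasingDist, LinearMap.trace_eq_sum_inner S u, map_sum]

/-- The Kirkwood–Dirac quasi-probability of the operator `S` with respect to two orthonormal
bases: a scalar-valued joint distribution whose marginals are the dephasing distributions. -/
noncomputable def kirkwoodDirac (S : E →ₗ[𝕜] E) (k : ι) (l : κ) : 𝕜 :=
  ⟪u k, v l⟫_𝕜 * ⟪v l, S (u k)⟫_𝕜

lemma sum_kirkwoodDirac_right (hS : S.IsSymmetric) (k : ι) :
    ∑ l, kirkwoodDirac u v S k l = dephasingDist u S k := by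
  simp only [kirkwoodDirac, v.sum_inner_mul_inner, dephasingDist, hS.coe_re_inner_self_apply]

lemma sum_kirkwoodDirac_left (hS : S.IsSymmetric) (l : κ) :
    ∑ k, kirkwoodDirac u v S k l = dephasingDist v S l := by
  simp only [kirkwoodDirac, ← hS (v l), mul_comm ⟪u _, v l⟫_𝕜, u.sum_inner_mul_inner]
  rw [hS, dephasingDist, hS.coe_re_inner_self_apply]

lemma sum_kirkwoodDirac (S : E →ₗ[𝕜] E) :
    ∑ k, ∑ l, kirkwoodDirac u v S k l = LinearMap.trace 𝕜 E S := by
  simp only [kirkwoodDirac, v.sum_inner_mul_inner, LinearMap.trace_eq_sum_inner S u]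

lemma pos_of_norm_inner_le_of_trace_ne_zero (htr : LinearMap.trace 𝕜 E S ≠ 0) {c : ℝ}
    (hc : ∀ k l, ‖⟪u k, v l⟫_𝕜‖ ≤ c) : 0 < c := by
  rw [← sum_kirkwoodDirac u v] at htr
  obtain ⟨k, -, hk⟩ := Finset.exists_ne_zero_of_sum_ne_zero htr
  obtain ⟨l, -, hkl⟩ := Finset.exists_ne_zero_of_sum_ne_zero hk
  exact (norm_pos_iff.mpr (left_ne_zero_of_mul hkl)).trans_le (hc k l)

lemma sum_add_mul_kirkwoodDirac (hS : S.IsSymmetric) (f : ι → ℝ) (g : κ → ℝ) :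
    ∑ k, ∑ l, ((f k + g l : ℝ) : 𝕜) * kirkwoodDirac u v S k l =
      ((∑ k, f k * dephasingDist u S k + ∑ l, g l * dephasingDist v S l : ℝ) : 𝕜) := by
  simp only [RCLike.ofReal_add, add_mul, Finset.sum_add_distrib, RCLike.ofReal_sum,
    RCLike.ofReal_mul, ← sum_kirkwoodDirac_right u v hS, ← sum_kirkwoodDirac_left u v hS,
    Finset.mul_sum]
  rw [Finset.sum_comm (f := fun k l ↦ (g l : 𝕜) * kirkwoodDirac u v S k l)]

lemma norm_kirkwoodDirac_le (hS : S.IsPositive) {c : ℝ} {k : ι} {l : κ}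
    (hc : ‖⟪u k, v l⟫_𝕜‖ ≤ c) :
    ‖kirkwoodDirac u v S k l‖ ≤ c * (√(dephasingDist u S k) * √(dephasingDist v S l)) := by
  rw [kirkwoodDirac, norm_mul, mul_comm √_]
  have hc_nonneg : 0 ≤ c := (norm_nonneg _).trans hc
  gcongr
  exact norm_inner_map_le_sqrt_mul_sqrt hS (v l) (u k)

lemma sum_mul_kirkwoodDirac_eq_trace (S : E →ₗ[𝕜] E) (α : ι → 𝕜) (β : κ → 𝕜) :
    ∑ k, ∑ l, α k * β l * kirkwoodDirac u v S k l =
      LinearMap.trace 𝕜 E (diagonalOperator u α * diagonalOperator v β * S) := by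
  rw [LinearMap.trace_eq_sum_inner _ u]
  refine Finset.sum_congr rfl fun k _ ↦ ?_
  simp only [Module.End.mul_apply, inner_diagonalOperator, kirkwoodDirac]
  rw [← v.sum_inner_mul_inner, Finset.mul_sum]
  refine Finset.sum_congr rfl fun l _ ↦ ?_
  rw [inner_diagonalOperator]
  ring

theorem norm_sum_mul_kirkwoodDirac_le (hS : S.IsPositive) {α : ι → 𝕜} {β : κ → 𝕜}
    (hα : ∀ k, ‖α k‖ ≤ 1) (hβ : ∀ l, ‖β l‖ ≤ 1) :
    ‖∑ k, ∑ l, α k * β l * kirkwoodDirac u v S k l‖ ≤ RCLike.re (LinearMap.trace 𝕜 E S) := by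
  have : FiniteDimensional 𝕜 E := u.toBasis.finiteDimensional_of_finite
  rw [sum_mul_kirkwoodDirac_eq_trace, LinearMap.trace_mul_comm]
  exact norm_trace_mul_le_of_isPositive hS fun x ↦
    (norm_diagonalOperator_le u hα _).trans (norm_diagonalOperator_le v hβ x)

end Operators

section MaassenUffink

lemma exp_half_log_mul_sqrt {x : ℝ} (hx : 0 ≤ x) : Real.exp (Real.log x / 2) * √x = x := by
  rcases hx.eq_or_lt with rfl | hx_pos
  · simp
  · rw [Real.exp_half, Real.exp_log hx_pos, Real.mul_self_sqrt hx]

variable {E ι κ : Type*} [NormedAddCommGroup E] [InnerProductSpace ℂ E] [Fintype ι] [Fintype κ]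
variable (u : OrthonormalBasis ι ℂ E) (v : OrthonormalBasis κ ℂ E) {S : E →ₗ[ℂ] E}

/-- The function interpolating between the two boundary estimates of the Maassen–Uffink
inequality, `∑ k l, (q k * r l) ^ (z / 2) * w k l` with `q`, `r` the dephasing distributions and `w`
the Kirkwood–Dirac quasi-probability. Where `q k * r l = 0` the weight `w k l` vanishes, so the
junk value `log 0 = 0` does no harm. -/
noncomputable def kirkwoodDiracInterpolation (S : E →ₗ[ℂ] E) : ℂ → ℂ :=
  expSum
    (fun i : ι × κ ↦ Real.log (dephasingDist u S i.1) / 2 + Real.log (dephasingDist v S i.2) / 2)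
    (fun i ↦ kirkwoodDirac u v S i.1 i.2)

lemma norm_kirkwoodDiracInterpolation_le_of_re_eq_zero (hS : S.IsPositive) {z : ℂ}
    (hz : z.re = 0) :
    ‖kirkwoodDiracInterpolation u v S z‖ ≤ (LinearMap.trace ℂ E S).re := by
  have norm_phase (x : ℝ) : ‖Complex.exp (z * x)‖ ≤ 1 := by
    simp [norm_exp_mul_ofReal, hz]
  simpa [kirkwoodDiracInterpolation, expSum, Fintype.sum_prod_type, mul_add, Complex.exp_add] using
    norm_sum_mul_kirkwoodDirac_le u v hS
      (fun k ↦ norm_phase (Real.log (dephasingDist u S k) / 2))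
      (fun l ↦ norm_phase (Real.log (dephasingDist v S l) / 2))

lemma exp_half_log_mul_norm_kirkwoodDirac_le (hS : S.IsPositive) {c : ℝ} {k : ι} {l : κ}
    (hc : ‖⟪u k, v l⟫_ℂ‖ ≤ c) :
    Real.exp (Real.log (dephasingDist u S k) / 2 + Real.log (dephasingDist v S l) / 2) *
      ‖kirkwoodDirac u v S k l‖ ≤ c * (dephasingDist u S k * dephasingDist v S l) := by
  set q := dephasingDist u S k
  set r := dephasingDist v S l
  calc Real.exp (Real.log q / 2 + Real.log r / 2) * ‖kirkwoodDirac u v S k l‖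
      ≤ Real.exp (Real.log q / 2 + Real.log r / 2) * (c * (√q * √r)) := by
        gcongr
        exact norm_kirkwoodDirac_le u v hS hc
    _ = c * ((Real.exp (Real.log q / 2) * √q) * (Real.exp (Real.log r / 2) * √r)) := by
        rw [Real.exp_add]
        ring
    _ = c * (q * r) := by
        rw [exp_half_log_mul_sqrt (dephasingDist_nonneg u hS k),
          exp_half_log_mul_sqrt (dephasingDist_nonneg v hS l)]

lemma norm_kirkwoodDiracInterpolation_le_of_re_eq_one (hS : S.IsPositive) {c : ℝ}
    (hc : ∀ k l, ‖⟪u k, v l⟫_ℂ‖ ≤ c) {z : ℂ} (hz : z.re = 1) :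
    ‖kirkwoodDiracInterpolation u v S z‖ ≤ c * (LinearMap.trace ℂ E S).re ^ 2 := by
  calc ‖kirkwoodDiracInterpolation u v S z‖
      ≤ ∑ i : ι × κ, c * (dephasingDist u S i.1 * dephasingDist v S i.2) := by
        refine (norm_expSum_le _ _ z).trans (Finset.sum_le_sum fun i _ ↦ ?_)
        rw [hz, one_mul]
        exact exp_half_log_mul_norm_kirkwoodDirac_le u v hS (hc i.1 i.2)
    _ = c * ((∑ k, dephasingDist u S k) * ∑ l, dephasingDist v S l) := by
        rw [← Finset.mul_sum, Fintype.sum_mul_sum, Fintype.sum_prod_type]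
    _ = c * (LinearMap.trace ℂ E S).re ^ 2 := by
        rw [sum_dephasingDist, sum_dephasingDist, sq, RCLike.re_eq_complex_re]

theorem neg_log_le_half_sum_negMulLog_dephasingDist (hS : S.IsPositive)
    (htr : LinearMap.trace ℂ E S = 1) {c : ℝ} (hc : ∀ k l, ‖⟪u k, v l⟫_ℂ‖ ≤ c) :
    -Real.log c ≤ (1 / 2) * (∑ k, Real.negMulLog (dephasingDist u S k) +
      ∑ l, Real.negMulLog (dephasingDist v S l)) := by
  have sum_eq_one : ∑ i : ι × κ, kirkwoodDirac u v S i.1 i.2 = 1 := by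
    rw [Fintype.sum_prod_type, sum_kirkwoodDirac, htr]
  have hc_pos : 0 < c := pos_of_norm_inner_le_of_trace_ne_zero u v (htr.trans_ne one_ne_zero) hc
  have norm_left (z : ℂ) (hz : z.re = 0) : ‖kirkwoodDiracInterpolation u v S z‖ ≤ 1 := by
    simpa [htr] using norm_kirkwoodDiracInterpolation_le_of_re_eq_zero u v hS hz
  have norm_right (z : ℂ) (hz : z.re = 1) : ‖kirkwoodDiracInterpolation u v S z‖ ≤ c := by
    simpa [htr] using norm_kirkwoodDiracInterpolation_le_of_re_eq_one u v hS hc hz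
  have deriv_le := re_sum_mul_le_log_of_norm_expSum_le hc_pos sum_eq_one norm_left norm_right
  rw [Fintype.sum_prod_type, ← RCLike.ofReal_eq_complex_ofReal,
    sum_add_mul_kirkwoodDirac u v hS.isSymmetric
      (fun k ↦ Real.log (dephasingDist u S k) / 2) (fun l ↦ Real.log (dephasingDist v S l) / 2),
    RCLike.ofReal_eq_complex_ofReal, Complex.ofReal_re] at deriv_le
  have half_negMulLog (x : ℝ) : Real.log x / 2 * x = -(1 / 2 * Real.negMulLog x) := by
    rw [Real.negMulLog]
    ring
  simp only [half_negMulLog, Finset.sum_neg_distrib, ← Finset.mul_sum] at deriv_le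
  linarith

theorem maassen_uffink_mixed_general (hS : S.IsPositive)
    (htr : LinearMap.trace ℂ E S = 1) {b c : ℝ} (hb : 1 < b) (hc : ∀ k l, ‖⟪u k, v l⟫_ℂ‖ ≤ c) :
    -Real.logb b c ≤ (1 / 2) * (∑ k, Real.negMulLog (dephasingDist u S k) / Real.log b +
      ∑ l, Real.negMulLog (dephasingDist v S l) / Real.log b) := by
  have log_pos : 0 < Real.log b := Real.log_pos hb
  rw [Real.logb, ← neg_div, ← Finset.sum_div, ← Finset.sum_div, ← add_div, ← mul_div_assoc]
  gcongr
  exact neg_log_le_half_sum_negMulLog_dephasingDist u v hS htr hc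

end MaassenUffink

/-- Maassen–Uffink relation for mixed states: the average unassisted erasure cost
after random dephasing in two orthonormal bases is lower bounded by the
state-independent complementarity benchmark `−log₂ c`. -/
theorem maassen_uffink_mixed
    (d : ℕ) (hd : 1 ≤ d)
    (ρ : Matrix (Fin d) (Fin d) ℂ)
    (hρ : ρ.PosSemidef) (htr : ρ.trace = 1)
    (u v : OrthonormalBasis (Fin d) ℂ (EuclideanSpace ℂ (Fin d)))
    (q r : Fin d → ℝ)
    (hq : ∀ k, q k = (inner (𝕜 := ℂ) (u k) (Matrix.toEuclideanLin ρ (u k))).re)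
    (hr : ∀ l, r l = (inner (𝕜 := ℂ) (v l) (Matrix.toEuclideanLin ρ (v l))).re)
    (c : ℝ)
    (hc : IsGreatest {x : ℝ | ∃ k l, x = ‖(inner (𝕜 := ℂ) (u k) (v l))‖} c) :
    (1 / 2) * (shannonEntropy2 q + shannonEntropy2 r) ≥ -Real.logb 2 c := by
  obtain ⟨rfl, rfl⟩ := And.intro (funext hq) (funext hr)
  exact maassen_uffink_mixed_general u v (Matrix.isPositive_toEuclideanLin_iff.mpr hρ)
    ((trace_toEuclideanLin ρ).trans htr) one_lt_two fun k l ↦ hc.2 ⟨k, l, rfl⟩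
end

section
/- Qubit LHS floor with mutually unbiased dephasings (the benchmark used for the Werner example): let Λ be a finite index set, p : Λ → ℝ a probability distribution (p(λ) ≥ 0 and Σ_λ p(λ) = 1), and for each λ let ρ_λ be a 2×2 complex matrix that is positive semidefinite with trace 1. For each λ define q_λ(k) = Re (ρ_λ)_{kk} for k : Fin 2 (computational-basis dephasing) and r_λ(ℓ) = Re ⟪h_ℓ, ρ_λ h_ℓ⟫ for ℓ : Fin 2 (Hadamard-basis dephasing), where h_0 = (1/√2)(1,1) and h_1 = (1/√2)(1,−1). Then (1/2)·Σ_λ p(λ)·(H(q_λ) + H(r_λ)) ≥ 1/2, where H is the base-2 Shannon entropy. -/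
open scoped ComplexOrder

/-- The Hadamard basis vectors `h₀ = (1,1)/√2`, `h₁ = (1,−1)/√2` of ℂ². -/
noncomputable def hadamard : Fin 2 → Fin 2 → ℂ := fun a x =>
  ((1 / Real.sqrt 2 : ℝ) : ℂ) * (if a = 1 ∧ x = 1 then -1 else 1)

/-!
Let `D z = log 2 - h ((1 + z) / 2)` be the entropy deficit of a coin of bias `z`. Its power series
`∑ z ^ (2 * k + 2) / ((2 * k + 1) * (2 * k + 2))` has nonnegative coefficients and starts at order
two, so `D (s * z) ≤ z ^ 2 * D s`; at `s = 1` this says `h p ≥ 4 * p * (1 - p) * log 2`. The entropy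
of a two-outcome distribution `q` is thus at least `4 * q 0 * q 1` bits.

After a unitary change of coordinates the first of the two unbiased bases is the standard one. If
`c` is the off-diagonal entry of the state, then `|c| ^ 2 ≤ q 0 * q 1` by positivity, while
unbiasedness gives `|r 0 - 1 / 2| ≤ |c|`, that is, `r 0 * r 1 ≥ 1 / 4 - |c| ^ 2`. Hence
`4 * q 0 * q 1 + 4 * r 0 * r 1 ≥ 1` for every state, and averaging over the ensemble concludes.
-/

open Matrix hiding hadamard
open Real

section BinaryEntropy

theorem hasSum_log_two_sub_binEntropy {z : ℝ} (hz : |z| < 1) :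
    HasSum (fun k : ℕ => z ^ (2 * k + 2) / ((2 * k + 1) * (2 * k + 2)))
      (log 2 - binEntropy ((1 + z) / 2)) := by
  obtain ⟨hz_lower, hz_upper⟩ := abs_lt.mp hz
  have hz_sq : |z ^ 2| < 1 := by
    rw [abs_pow]
    exact pow_lt_one₀ (abs_nonneg z) hz two_ne_zero
  have h_deficit : log 2 - binEntropy ((1 + z) / 2) =
      (z * (log (1 + z) - log (1 - z)) - -log (1 - z ^ 2)) / 2 := by
    have h_compl : 1 - (1 + z) / 2 = (1 - z) / 2 := by ring
    have h_factor : 1 - z ^ 2 = (1 + z) * (1 - z) := by ring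
    rw [binEntropy, h_compl, h_factor, log_inv, log_inv, log_div (by linarith) two_ne_zero,
      log_div (by linarith) two_ne_zero, log_mul (by linarith) (by linarith)]
    ring
  rw [h_deficit]
  refine ((((hasSum_log_sub_log_of_abs_lt_one hz).mul_left z).sub
    (hasSum_pow_div_log_of_abs_lt_one hz_sq)).div_const 2).congr_fun fun k => ?_
  field_simp
  ring

theorem log_two_sub_binEntropy_mul_le {s z : ℝ} (hs : |s| ≤ 1) (hz : |z| ≤ 1) :
    log 2 - binEntropy ((1 + s * z) / 2) ≤ z ^ 2 * (log 2 - binEntropy ((1 + s) / 2)) := by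
  have h_interior : ∀ t ∈ Set.Ioo (-1 : ℝ) 1,
      log 2 - binEntropy ((1 + t * z) / 2) ≤ z ^ 2 * (log 2 - binEntropy ((1 + t) / 2)) := by
    intro t ht
    have ht_abs : |t| < 1 := abs_lt.mpr ht
    have htz_abs : |t * z| < 1 := by
      rw [abs_mul]
      exact mul_lt_one_of_nonneg_of_lt_one_left (abs_nonneg t) ht_abs hz
    refine hasSum_le (fun k => ?_) (hasSum_log_two_sub_binEntropy htz_abs)
      ((hasSum_log_two_sub_binEntropy ht_abs).mul_left (z ^ 2))
    have h_even : Even (2 * k + 2) := (even_two_mul k).add even_two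
    have hz_pow : z ^ (2 * k + 2) ≤ z ^ 2 := by
      rw [← h_even.pow_abs, ← sq_abs z]
      exact pow_le_pow_of_le_one (abs_nonneg z) hz (by lia)
    have ht_pow : 0 ≤ t ^ (2 * k + 2) := h_even.pow_nonneg t
    rw [← mul_div_assoc, mul_pow, mul_comm (t ^ _)]
    gcongr
  have hs_mem : s ∈ closure (Set.Ioo (-1 : ℝ) 1) := by
    rw [closure_Ioo (by norm_num)]
    exact abs_le.mp hs
  exact le_on_closure h_interior (by fun_prop) (by fun_prop) hs_mem

theorem four_mul_mul_one_sub_mul_log_two_le_binEntropy {p : ℝ} (hp₀ : 0 ≤ p) (hp₁ : p ≤ 1) :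
    4 * p * (1 - p) * log 2 ≤ binEntropy p := by
  have h_bias : |2 * p - 1| ≤ 1 := abs_le.mpr ⟨by linarith, by linarith⟩
  have h_deficit := log_two_sub_binEntropy_mul_le (s := 1) (by simp) h_bias
  have h_coin : (1 + 1 * (2 * p - 1)) / 2 = p := by ring
  rw [h_coin, add_self_div_two, binEntropy_one] at h_deficit
  linarith

theorem four_mul_mul_le_shannonEntropy2 {q : Fin 2 → ℝ} (hq : q ∈ stdSimplex ℝ (Fin 2)) :
    4 * q 0 * q 1 ≤ shannonEntropy2 q := by
  have h_compl : q 1 = 1 - q 0 := by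
    rw [← hq.2, Fin.sum_univ_two, add_sub_cancel_left]
  have h_le_one : q 0 ≤ 1 := by linarith [hq.1 1]
  rw [shannonEntropy2, ← Finset.sum_div, Fin.sum_univ_two, h_compl,
    ← binEntropy_eq_negMulLog_add_negMulLog_one_sub, le_div_iff₀ (log_pos one_lt_two)]
  exact four_mul_mul_one_sub_mul_log_two_le_binEntropy (hq.1 0) h_le_one

end BinaryEntropy

section Dephasing

variable {n : Type*} [Fintype n]

/-- The outcome distribution of measuring (equivalently, the spectrum left after dephasing) the
state `M` in the basis formed by the columns of `U`. -/
noncomputable def dephasing (U M : Matrix n n ℂ) (k : n) : ℝ :=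
  ((Uᴴ * M * U) k k).re

/-- The bases formed by the columns of `U` and of `V` are mutually unbiased: all overlaps have
squared modulus `1 / d` in dimension `d`. -/
def MutuallyUnbiased (U V : Matrix n n ℂ) : Prop :=
  ∀ k l, ‖(Uᴴ * V) k l‖ ^ 2 = (Fintype.card n : ℝ)⁻¹

theorem dephasing_one [DecidableEq n] (M : Matrix n n ℂ) (k : n) :
    dephasing 1 M k = (M k k).re := by
  simp [dephasing]

theorem dephasing_eq_sum (U M : Matrix n n ℂ) (l : n) :
    dephasing U M l = (∑ k, ∑ m, starRingEnd ℂ (U k l) * M k m * U m l).re := by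
  simp only [dephasing, mul_apply, conjTranspose_apply, Finset.sum_mul, starRingEnd_apply]
  rw [Finset.sum_comm]

theorem dephasing_conjTranspose_mul [DecidableEq n] {U : Matrix n n ℂ}
    (hU : U ∈ unitaryGroup n ℂ) (V M : Matrix n n ℂ) :
    dephasing (Uᴴ * V) (Uᴴ * M * U) = dephasing V M := by
  have h_unitary : U * Uᴴ = 1 := mem_unitaryGroup_iff.mp hU
  have h_cancel (A : Matrix n n ℂ) : U * (Uᴴ * A) = A := by
    rw [← mul_assoc, h_unitary, one_mul]
  funext k
  simp only [dephasing, conjTranspose_mul, conjTranspose_conjTranspose, mul_assoc, h_cancel]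

theorem trace_conjTranspose_mul_mul_of_mem_unitaryGroup [DecidableEq n] {U : Matrix n n ℂ}
    (hU : U ∈ unitaryGroup n ℂ) (M : Matrix n n ℂ) : (Uᴴ * M * U).trace = M.trace := by
  rw [trace_mul_comm, ← mul_assoc, ← star_eq_conjTranspose, mem_unitaryGroup_iff.mp hU, one_mul]

theorem dephasing_mem_stdSimplex [DecidableEq n] {U M : Matrix n n ℂ}
    (hU : U ∈ unitaryGroup n ℂ) (hM : M.PosSemidef) (htr : M.trace = 1) :
    dephasing U M ∈ stdSimplex ℝ n := by
  refine ⟨fun k => ?_, ?_⟩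
  · exact (Complex.le_def.mp (hM.conjTranspose_mul_mul_same U).diag_nonneg).1
  · calc
      ∑ k, dephasing U M k = (Uᴴ * M * U).trace.re := (Complex.re_sum _ _).symm
      _ = 1 := by
        rw [trace_conjTranspose_mul_mul_of_mem_unitaryGroup hU, htr, Complex.one_re]

theorem norm_sq_apply_le_of_posSemidef {m 𝕜 : Type*} [RCLike 𝕜] {M : Matrix m m 𝕜}
    (hM : M.PosSemidef) (i j : m) :
    ‖M i j‖ ^ 2 ≤ RCLike.re (M i i) * RCLike.re (M j j) := by
  have h_minor : 0 ≤ M i i * M j j - M i j * M j i := by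
    have h_det := (hM.submatrix ![i, j]).det_nonneg
    rwa [det_fin_two] at h_det
  have h_diag : RCLike.im (M i i) = 0 := (RCLike.nonneg_iff.mp hM.diag_nonneg).2
  have h_off_diag : M i j * M j i = ((‖M i j‖ ^ 2 : ℝ) : 𝕜) := by
    rw [← hM.isHermitian.apply j i, RCLike.star_def, RCLike.mul_conj, RCLike.ofReal_pow]
  rw [h_off_diag] at h_minor
  simpa [RCLike.mul_re, h_diag] using (RCLike.nonneg_iff.mp h_minor).1

end Dephasing

section Qubit

theorem abs_dephasing_sub_half_trace_le {V M : Matrix (Fin 2) (Fin 2) ℂ}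
    (hV : MutuallyUnbiased 1 V) (hM : M.IsHermitian) (l : Fin 2) :
    |dephasing V M l - M.trace.re / 2| ≤ ‖M 0 1‖ := by
  have h_overlap (k : Fin 2) : ‖V k l‖ ^ 2 = 1 / 2 := by
    simpa using hV k l
  have h_interference :
      dephasing V M l - M.trace.re / 2 = 2 * (starRingEnd ℂ (V 0 l) * M 0 1 * V 1 l).re := by
    have h_zero := h_overlap 0
    have h_one := h_overlap 1
    rw [Complex.sq_norm, Complex.normSq_apply] at h_zero h_one
    rw [dephasing_eq_sum]
    simp only [Fin.sum_univ_two, trace_fin_two, ← hM.apply 1 0, RCLike.star_def, Complex.add_re,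
      Complex.mul_re, Complex.mul_im, Complex.conj_re, Complex.conj_im]
    linear_combination (M 0 0).re * h_zero + (M 1 1).re * h_one
  have h_norm : 2 * ‖starRingEnd ℂ (V 0 l) * M 0 1 * V 1 l‖ = ‖M 0 1‖ := by
    have h_modulus : ‖V 0 l‖ = ‖V 1 l‖ := by
      rw [← sq_eq_sq₀ (norm_nonneg _) (norm_nonneg _), h_overlap, h_overlap]
    rw [norm_mul, norm_mul, Complex.norm_conj, h_modulus]
    linear_combination 2 * ‖M 0 1‖ * h_overlap 1
  rw [h_interference, abs_mul, abs_two, ← h_norm]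
  gcongr
  exact Complex.abs_re_le_norm _

theorem one_le_four_mul_dephasing_one_add {V M : Matrix (Fin 2) (Fin 2) ℂ}
    (hV : V ∈ unitaryGroup (Fin 2) ℂ) (h_unbiased : MutuallyUnbiased 1 V)
    (hM : M.PosSemidef) (htr : M.trace = 1) :
    1 ≤ 4 * dephasing 1 M 0 * dephasing 1 M 1 + 4 * dephasing V M 0 * dephasing V M 1 := by
  have h_bias : (dephasing V M 0 - 1 / 2) ^ 2 ≤ ‖M 0 1‖ ^ 2 := by
    rw [sq_le_sq, abs_norm]
    simpa only [htr, Complex.one_re] using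
      abs_dephasing_sub_half_trace_le h_unbiased hM.isHermitian 0
  have h_coherence : ‖M 0 1‖ ^ 2 ≤ dephasing 1 M 0 * dephasing 1 M 1 := by
    rw [dephasing_one, dephasing_one]
    exact norm_sq_apply_le_of_posSemidef hM 0 1
  have h_compl : dephasing V M 1 = 1 - dephasing V M 0 := by
    rw [← (dephasing_mem_stdSimplex hV hM htr).2, Fin.sum_univ_two, add_sub_cancel_left]
  rw [h_compl]
  linarith

theorem one_le_four_mul_dephasing_add {U V M : Matrix (Fin 2) (Fin 2) ℂ}
    (hU : U ∈ unitaryGroup (Fin 2) ℂ) (hV : V ∈ unitaryGroup (Fin 2) ℂ)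
    (hUV : MutuallyUnbiased U V) (hM : M.PosSemidef) (htr : M.trace = 1) :
    1 ≤ 4 * dephasing U M 0 * dephasing U M 1 + 4 * dephasing V M 0 * dephasing V M 1 := by
  have h_unitary : Uᴴ * V ∈ unitaryGroup (Fin 2) ℂ := mul_mem (Unitary.star_mem hU) hV
  have h_unbiased : MutuallyUnbiased 1 (Uᴴ * V) := by
    simpa only [MutuallyUnbiased, conjTranspose_one, one_mul] using hUV
  have h_rotated := one_le_four_mul_dephasing_one_add h_unitary h_unbiased
    (hM.conjTranspose_mul_mul_same U)
    ((trace_conjTranspose_mul_mul_of_mem_unitaryGroup hU M).trans htr)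
  have h_one : dephasing 1 (Uᴴ * M * U) = dephasing U M := by
    rw [← dephasing_conjTranspose_mul hU U M, ← star_eq_conjTranspose,
      mem_unitaryGroup_iff'.mp hU]
  rwa [dephasing_conjTranspose_mul hU, h_one] at h_rotated

theorem one_le_shannonEntropy2_dephasing_add {U V M : Matrix (Fin 2) (Fin 2) ℂ}
    (hU : U ∈ unitaryGroup (Fin 2) ℂ) (hV : V ∈ unitaryGroup (Fin 2) ℂ)
    (hUV : MutuallyUnbiased U V) (hM : M.PosSemidef) (htr : M.trace = 1) :
    1 ≤ shannonEntropy2 (dephasing U M) + shannonEntropy2 (dephasing V M) :=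
  calc
    1 ≤ 4 * dephasing U M 0 * dephasing U M 1 + 4 * dephasing V M 0 * dephasing V M 1 :=
      one_le_four_mul_dephasing_add hU hV hUV hM htr
    _ ≤ shannonEntropy2 (dephasing U M) + shannonEntropy2 (dephasing V M) :=
      add_le_add (four_mul_mul_le_shannonEntropy2 (dephasing_mem_stdSimplex hU hM htr))
        (four_mul_mul_le_shannonEntropy2 (dephasing_mem_stdSimplex hV hM htr))

theorem qubit_lhs_floor_general {U V : Matrix (Fin 2) (Fin 2) ℂ}
    (hU : U ∈ unitaryGroup (Fin 2) ℂ) (hV : V ∈ unitaryGroup (Fin 2) ℂ)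
    (hUV : MutuallyUnbiased U V) {Λ : Type*} [Fintype Λ]
    {p : Λ → ℝ} (hp : ∀ lam, 0 ≤ p lam) (hpsum : ∑ lam, p lam = 1)
    {ρ : Λ → Matrix (Fin 2) (Fin 2) ℂ}
    (hρ : ∀ lam, (ρ lam).PosSemidef) (htr : ∀ lam, (ρ lam).trace = 1) :
    1 / 2 ≤ (1 / 2) * ∑ lam, p lam *
      (shannonEntropy2 (dephasing U (ρ lam)) + shannonEntropy2 (dephasing V (ρ lam))) := by
  have h_average : ∑ lam, p lam ≤ ∑ lam, p lam *
      (shannonEntropy2 (dephasing U (ρ lam)) + shannonEntropy2 (dephasing V (ρ lam))) :=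
    Finset.sum_le_sum fun lam _ => le_mul_of_one_le_right (hp lam)
      (one_le_shannonEntropy2_dephasing_add hU hV hUV (hρ lam) (htr lam))
  linarith

end Qubit

section Hadamard

theorem transpose_hadamard_mem_unitaryGroup : (of hadamard)ᵀ ∈ unitaryGroup (Fin 2) ℂ := by
  have h_sqrt : ((√2 : ℝ) : ℂ)⁻¹ * ((√2 : ℝ) : ℂ)⁻¹ = 1 / 2 := by
    rw [← mul_inv, ← Complex.ofReal_mul, mul_self_sqrt zero_le_two]
    norm_num
  rw [mem_unitaryGroup_iff]
  ext i j
  fin_cases i <;> fin_cases j <;>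
    simp [mul_apply, Fin.sum_univ_two, hadamard, h_sqrt]
  all_goals norm_num

theorem mutuallyUnbiased_one_transpose_hadamard : MutuallyUnbiased 1 (of hadamard)ᵀ := by
  intro k l
  simp only [conjTranspose_one, one_mul, transpose_apply, of_apply, hadamard]
  split_ifs <;> simp

end Hadamard

/-- Qubit LHS floor with mutually unbiased dephasings: for any local-hidden-state
ensemble of qubit density matrices, the average assisted erasure cost with uniform
random dephasing in the computational and Hadamard bases is at least `1/2` bit. -/
theorem qubit_lhs_floor
    (Λ : Type*) [Fintype Λ]
    (p : Λ → ℝ) (hp : ∀ lam, 0 ≤ p lam) (hpsum : ∑ lam, p lam = 1)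
    (ρ : Λ → Matrix (Fin 2) (Fin 2) ℂ)
    (hρ : ∀ lam, (ρ lam).PosSemidef) (htr : ∀ lam, (ρ lam).trace = 1)
    (q r : Λ → Fin 2 → ℝ)
    (hq : ∀ lam k, q lam k = (ρ lam k k).re)
    (hr : ∀ lam l, r lam l =
      (∑ k, ∑ m, (starRingEnd ℂ) (hadamard l k) * ρ lam k m * hadamard l m).re) :
    (1 / 2) * ∑ lam, p lam * (shannonEntropy2 (q lam) + shannonEntropy2 (r lam)) ≥
      1 / 2 := by
  have h_computational : q = fun lam => dephasing 1 (ρ lam) :=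
    funext₂ fun lam k => by rw [hq, dephasing_one]
  have h_hadamard : r = fun lam => dephasing (of hadamard)ᵀ (ρ lam) :=
    funext₂ fun lam l => by simp only [hr, dephasing_eq_sum, transpose_apply, of_apply]
  rw [h_computational, h_hadamard]
  exact qubit_lhs_floor_general (one_mem _) transpose_hadamard_mem_unitaryGroup
    mutuallyUnbiased_one_transpose_hadamard hp hpsum hρ htr
end
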